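/- Let s ≥ 1 and n = T_s + 1. Then a partition λ of n satisfies deg(λ) = Δ_n if and only if λ = (s+1, s−1, s−2, ..., 1) or λ = (s, s−1, ..., 2, 1, 1). In particular, the number of degree-maximizing partitions of n is exactly 2. -/

import Mathlib

/-!
Write `r` for the number of distinct part sizes of a partition of `T s + 1`. The two bonus counts
are at most `r` each, so `deg ≤ r (r + 1)`, which is at most `s (s - 1)` when `r < s`. A set of `r`
distinct positive integers has sum at least `T r`, which rules out `r > s`. When `r = s`, the set
of part sizes has sum `T s` or `T s + 1` (`finset_sum_rigid`): in the first case it is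
`{1, …, s}` and the one remaining unit is an extra part `1`; in the second case it is
`{1, …, s - 1, s + 1}` and no part is repeated. Both of these partitions have degree
`s (s - 1) + 1`, so they are exactly the maximizers.
-/

namespace PartitionDegree

/-- The `m`-th triangular number. -/
def T (m : ℕ) : ℕ := m * (m + 1) / 2

/-- The number of distinct part sizes of a partition. -/
def supp {n : ℕ} (lam : n.Partition) : ℕ := lam.parts.toFinset.card

/-- The gap-bonus count: distinct part sizes `L ≥ 2` such that `L - 1` is not a part size. -/
def gapBonus {n : ℕ} (lam : n.Partition) : ℕ :=
  (lam.parts.toFinset.filter (fun L => 2 ≤ L ∧ (L - 1) ∉ lam.parts)).card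

/-- The multiplicity-bonus count: distinct part sizes occurring with multiplicity at least 2. -/
def multBonus {n : ℕ} (lam : n.Partition) : ℕ :=
  (lam.parts.toFinset.filter (fun L => 2 ≤ lam.parts.count L)).card

/-- The degree of a partition in the partition graph. -/
def deg {n : ℕ} (lam : n.Partition) : ℕ :=
  supp lam * (supp lam - 1) + gapBonus lam + multBonus lam

/-- The maximal degree over all partitions of `n`. -/
def maxDeg (n : ℕ) : ℕ := Finset.univ.sup (fun lam : n.Partition => deg lam)

/-- `ρ(q)`: the maximum of `a + b` over pairs with `T a + T b ≤ q`. -/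
noncomputable def rho (q : ℕ) : ℕ := sSup {c : ℕ | ∃ a b : ℕ, c = a + b ∧ T a + T b ≤ q}

/-- `mu` is the conjugate of `lam`: for each `k ≥ 1`, the multiplicity of `k` in `mu`
equals (number of parts of `lam` that are `≥ k`) minus (number of parts `≥ k + 1`). -/
def IsConjugate {n : ℕ} (lam mu : n.Partition) : Prop :=
  ∀ k : ℕ, 1 ≤ k →
    mu.parts.count k =
      Multiset.countP (fun p => k ≤ p) lam.parts -
        Multiset.countP (fun p => k + 1 ≤ p) lam.parts

lemma T_succ (s : ℕ) : T (s + 1) = T s + (s + 1) := by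
  unfold T
  have h : (s + 1) * (s + 1 + 1) = s * (s + 1) + (s + 1) * 2 := by ring
  rw [h, Nat.add_mul_div_right _ _ (by norm_num)]

lemma T_mono : Monotone T :=
  monotone_nat_of_le_succ fun s => by rw [T_succ]; omega

lemma sum_Icc_eq_T (s : ℕ) : ∑ i ∈ Finset.Icc 1 s, i = T s := by
  induction s with
  | zero => simp [T]
  | succ k ih => rw [Finset.sum_Icc_succ_top (by omega), ih, T_succ]

/-- A set of `s` positive integers has sum at least `T s`, and the sums `T s` and `T s + 1` are
each attained by only one such set. The induction removes the largest element. -/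
lemma finset_sum_rigid (s : ℕ) : ∀ S : Finset ℕ, (∀ x ∈ S, 1 ≤ x) → S.card = s →
    T s ≤ ∑ x ∈ S, x ∧
    (∑ x ∈ S, x = T s → S = Finset.Icc 1 s) ∧
    (∑ x ∈ S, x = T s + 1 → 1 ≤ s ∧ S = insert (s + 1) (Finset.Icc 1 (s - 1))) := by
  induction s with
  | zero =>
    intro S _ hc
    rw [Finset.card_eq_zero] at hc
    subst hc
    simp [T]
  | succ k ih =>
    intro S hpos hc
    have hne : S.Nonempty := Finset.card_pos.mp (by omega)
    obtain ⟨M, hM, hmax⟩ : ∃ M ∈ S, ∀ x ∈ S, x ≤ M :=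
      ⟨S.max' hne, S.max'_mem hne, fun x hx => S.le_max' x hx⟩
    have hMge : k + 1 ≤ M := by
      have hsub : S ⊆ Finset.Icc 1 M := fun x hx => Finset.mem_Icc.mpr ⟨hpos x hx, hmax x hx⟩
      have := Finset.card_le_card hsub
      simpa [hc] using this
    obtain ⟨h1, h2, h3⟩ := ih (S.erase M) (fun x hx => hpos x (Finset.mem_of_mem_erase hx))
      (by rw [Finset.card_erase_of_mem hM, hc]; rfl)
    have hsum : ∑ x ∈ S.erase M, x + M = ∑ x ∈ S, x := Finset.sum_erase_add S _ hM
    have hS : S = insert M (S.erase M) := (Finset.insert_erase hM).symm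
    rw [T_succ]
    refine ⟨by omega, fun h => ?_, fun h => ⟨by omega, ?_⟩⟩
    · rw [hS, h2 (by omega)]
      obtain rfl : M = k + 1 := by omega
      ext x
      simp only [Finset.mem_insert, Finset.mem_Icc]
      omega
    · rcases Nat.lt_or_ge (k + 1) M with hlt | hge
      · obtain rfl : M = k + 1 + 1 := by omega
        rw [hS, h2 (by omega)]
        rfl
      · -- If `M = k + 1`, the rest has sum `T k + 1`, hence contains `k + 1 = M` again.
        exfalso
        obtain ⟨_, he⟩ := h3 (by omega)
        obtain rfl : M = k + 1 := by omega
        exact Finset.notMem_erase (k + 1) S (by rw [he]; simp)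

lemma card_Icc_insert (s : ℕ) (hs : 1 ≤ s) :
    (insert (s + 1) (Finset.Icc 1 (s - 1))).card = s := by
  rw [Finset.card_insert_of_notMem (by simp), Nat.card_Icc]
  omega

lemma deg_of_gap {s n : ℕ} (hs : 1 ≤ s) (lam : n.Partition)
    (h : lam.parts = (s + 1) ::ₘ (Finset.Icc 1 (s - 1)).val) :
    deg lam = s * (s - 1) + 1 := by
  have hf : lam.parts.toFinset = insert (s + 1) (Finset.Icc 1 (s - 1)) := by
    rw [h]; simp
  have hnd : lam.parts.Nodup := by
    rw [h, Multiset.nodup_cons]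
    exact ⟨by simp, Finset.nodup _⟩
  have hmem : ∀ x, x ∈ lam.parts ↔ x = s + 1 ∨ 1 ≤ x ∧ x ≤ s - 1 := by
    intro x; rw [h]; simp
  have hsupp : supp lam = s := by
    unfold supp; rw [hf, card_Icc_insert s hs]
  have hgap : gapBonus lam = 1 := by
    unfold gapBonus
    rw [Finset.card_eq_one]
    refine ⟨s + 1, ?_⟩
    ext x
    simp only [Finset.mem_filter, Multiset.mem_toFinset, hmem, Finset.mem_singleton]
    omega
  have hmult : multBonus lam = 0 := by
    unfold multBonus
    rw [Finset.card_eq_zero, Finset.filter_eq_empty_iff]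
    intro x _
    have := Multiset.nodup_iff_count_le_one.mp hnd x
    omega
  unfold deg
  rw [hsupp, hgap, hmult]

lemma deg_of_mult {s n : ℕ} (hs : 1 ≤ s) (lam : n.Partition)
    (h : lam.parts = 1 ::ₘ (Finset.Icc 1 s).val) :
    deg lam = s * (s - 1) + 1 := by
  have hmem : ∀ x, x ∈ lam.parts ↔ 1 ≤ x ∧ x ≤ s := by
    intro x; rw [h]; simp; omega
  have hf : lam.parts.toFinset = Finset.Icc 1 s := by
    ext x; simp [hmem]
  have hsupp : supp lam = s := by
    unfold supp; rw [hf]; simp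
  have hgap : gapBonus lam = 0 := by
    unfold gapBonus
    rw [Finset.card_eq_zero, Finset.filter_eq_empty_iff]
    intro x
    simp only [Multiset.mem_toFinset, hmem]
    omega
  have hmult : multBonus lam = 1 := by
    unfold multBonus
    rw [Finset.card_eq_one]
    refine ⟨1, ?_⟩
    ext x
    have hc := Multiset.nodup_iff_count_le_one.mp (Finset.Icc 1 s).nodup x
    have h1 : Multiset.count 1 (Finset.Icc 1 s).val = 1 :=
      Multiset.count_eq_one_of_mem (Finset.nodup _) (by simpa using hs)
    simp only [Finset.mem_filter, Multiset.mem_toFinset, hmem, Finset.mem_singleton]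
    rw [h, Multiset.count_cons]
    split_ifs with hx
    · subst hx
      omega
    · omega
  unfold deg
  rw [hsupp, hgap, hmult]

/-- The set of part sizes together with the remaining repeated parts. -/
lemma exists_rest {n : ℕ} (lam : n.Partition) :
    ∃ R : Multiset ℕ, lam.parts = lam.parts.toFinset.val + R ∧
      ∑ x ∈ lam.parts.toFinset, x + R.sum = n := by
  obtain ⟨R, hR⟩ := Multiset.le_iff_exists_add.mp (Multiset.dedup_le lam.parts)
  refine ⟨R, hR, ?_⟩
  have h := congrArg Multiset.sum hR
  rw [lam.parts_sum, Multiset.sum_add] at h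
  rw [Finset.sum_eq_multiset_sum, Multiset.map_id', Multiset.toFinset_val]
  exact h.symm

lemma supp_le (s : ℕ) (hs : 1 ≤ s) (lam : (T s + 1).Partition) : supp lam ≤ s := by
  by_contra! hlt
  obtain ⟨R, -, hsum⟩ := exists_rest lam
  have h := (finset_sum_rigid (supp lam) lam.parts.toFinset
    (fun x hx => lam.parts_pos (Multiset.mem_toFinset.mp hx)) rfl).1
  have hm : T (s + 1) ≤ T (supp lam) := T_mono hlt
  rw [T_succ] at hm
  omega

lemma parts_of_supp_eq (s : ℕ) (lam : (T s + 1).Partition) (h : supp lam = s) :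
    lam.parts = (s + 1) ::ₘ (Finset.Icc 1 (s - 1)).val ∨
      lam.parts = 1 ::ₘ (Finset.Icc 1 s).val := by
  obtain ⟨R, hR, hsum⟩ := exists_rest lam
  have hRpos : ∀ x ∈ R, 1 ≤ x := fun x hx =>
    lam.parts_pos (by rw [hR]; exact Multiset.mem_add.mpr (Or.inr hx))
  have hRcard : R.card ≤ R.sum := by
    simpa using Multiset.card_nsmul_le_sum hRpos
  obtain ⟨h1, h2, h3⟩ := finset_sum_rigid s lam.parts.toFinset
    (fun x hx => lam.parts_pos (Multiset.mem_toFinset.mp hx)) h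
  rcases Nat.lt_or_ge (T s) (∑ x ∈ lam.parts.toFinset, x) with hlt | hge
  · left
    obtain rfl : R = 0 := Multiset.card_eq_zero.mp (by omega)
    rw [hR, (h3 (by omega)).2, Finset.insert_val_of_notMem (by simp), add_zero]
  · right
    obtain rfl : R = {1} := by
      have hRs : R.sum = 1 := by omega
      have hne : R.card ≠ 0 := by
        intro h0
        rw [Multiset.card_eq_zero.mp h0] at hRs
        simp at hRs
      obtain ⟨a, rfl⟩ := Multiset.card_eq_one.mp (show R.card = 1 by omega)
      simpa using hRs
    rw [hR, h2 (by omega), add_comm, Multiset.singleton_add]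

lemma deg_le (s : ℕ) {n : ℕ} (lam : n.Partition) (h : supp lam < s) :
    deg lam ≤ s * (s - 1) := by
  have hg : gapBonus lam ≤ supp lam := Finset.card_filter_le _ _
  have hm : multBonus lam ≤ supp lam := Finset.card_filter_le _ _
  unfold deg
  generalize supp lam = r at *
  obtain ⟨t, rfl⟩ : ∃ t, s = t + 1 := ⟨s - 1, by omega⟩
  rw [Nat.add_sub_cancel]
  rcases r with _ | r
  · omega
  · rw [Nat.add_sub_cancel]
    nlinarith

/-- The partition `(s + 1, s - 1, …, 1)`. -/
def gapPartition (s : ℕ) (hs : 1 ≤ s) : (T s + 1).Partition where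
  parts := (s + 1) ::ₘ (Finset.Icc 1 (s - 1)).val
  parts_pos := by
    intro i hi
    simp at hi
    omega
  parts_sum := by
    obtain ⟨t, rfl⟩ : ∃ t, s = t + 1 := ⟨s - 1, by omega⟩
    have h := sum_Icc_eq_T t
    rw [Finset.sum_eq_multiset_sum, Multiset.map_id'] at h
    rw [Multiset.sum_cons, Nat.add_sub_cancel, h, T_succ]
    omega

/-- The partition `(s, s - 1, …, 2, 1, 1)`. -/
def multPartition (s : ℕ) : (T s + 1).Partition where
  parts := 1 ::ₘ (Finset.Icc 1 s).val
  parts_pos := by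
    intro i hi
    simp at hi
    omega
  parts_sum := by
    have h := sum_Icc_eq_T s
    rw [Finset.sum_eq_multiset_sum, Multiset.map_id'] at h
    rw [Multiset.sum_cons, h, add_comm]

lemma maxDeg_eq (s : ℕ) (hs : 1 ≤ s) : maxDeg (T s + 1) = s * (s - 1) + 1 := by
  apply le_antisymm
  · refine Finset.sup_le fun lam _ => ?_
    rcases (supp_le s hs lam).lt_or_eq with hlt | heq
    · exact (deg_le s lam hlt).trans (Nat.le_succ _)
    · rcases parts_of_supp_eq s lam heq with h | h
      · exact (deg_of_gap hs lam h).le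
      · exact (deg_of_mult hs lam h).le
  · rw [← deg_of_mult hs (multPartition s) rfl]
    exact Finset.le_sup (f := fun lam : (T s + 1).Partition => deg lam) (Finset.mem_univ _)

/-- for `n = T s + 1`, the degree maximizers are exactly
`(s+1, s-1, …, 1)` and `(s, s-1, …, 1, 1)`, and there are exactly `2` of them. -/
theorem first_window (s : ℕ) (hs : 1 ≤ s) :
    (∀ lam : (T s + 1).Partition,
        deg lam = maxDeg (T s + 1) ↔
          lam.parts = (s + 1) ::ₘ (Finset.Icc 1 (s - 1)).val ∨
            lam.parts = 1 ::ₘ (Finset.Icc 1 s).val) ∧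
      (Finset.univ.filter
          (fun lam : (T s + 1).Partition => deg lam = maxDeg (T s + 1))).card = 2 := by
  have key : ∀ lam : (T s + 1).Partition,
      deg lam = maxDeg (T s + 1) ↔
        lam.parts = (s + 1) ::ₘ (Finset.Icc 1 (s - 1)).val ∨
          lam.parts = 1 ::ₘ (Finset.Icc 1 s).val := by
    intro lam
    rw [maxDeg_eq s hs]
    constructor
    · intro h
      refine parts_of_supp_eq s lam (le_antisymm (supp_le s hs lam) ?_)
      by_contra! hlt
      have := deg_le s lam hlt
      omega
    · rintro (h | h)
      · exact deg_of_gap hs lam h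
      · exact deg_of_mult hs lam h
  refine ⟨key, Finset.card_eq_two.mpr ⟨gapPartition s hs, multPartition s, ?_, ?_⟩⟩
  · intro h
    -- The part `s + 1` occurs only in the first partition.
    have hmem : s + 1 ∈ (multPartition s).parts := by
      rw [← h]
      simp [gapPartition]
    simp [multPartition] at hmem
    omega
  · ext lam
    rw [Finset.mem_filter, key]
    simp only [Finset.mem_univ, true_and, Finset.mem_insert, Finset.mem_singleton,
      Nat.Partition.ext_iff, gapPartition, multPartition]

end PartitionDegree
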